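/- Let K be a division ring and R = K[t]. Let {Δ_j : j ∈ J} be a nonempty family of full algebraic subsets of K. Then ⋂_{j∈J} Δ_j is a full algebraic set, and its minimal polynomial is the right greatest common divisor of {f_{Δ_j} : j ∈ J}, i.e. the monic generator of the left ideal Σ_{j∈J} R·f_{Δ_j}. -/

import Mathlib

/-!
Let `g` be the monic generator of `Σⱼ R·fⱼ`. The product formula `(p u)(a) = p(x a x⁻¹) x` with
`x = u(a) ≠ 0` shows that polynomials vanishing at a point form a left ideal, so
`V(g) = ⋂ V(fⱼ) = ⋂ Δⱼ`. The real content is that `g` is the *minimal* polynomial of `V(g)`.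
Fix one `f = fⱼ`, with `Δ = Δⱼ`; then `g` is a right divisor of `f`, and a right divisor of a
minimal polynomial is again the minimal polynomial of its zero set (`mem_span_of_vanish`).

The reason is that `R/Rf` is semisimple, being embedded in a product of simple modules
`R/R(t - a)`, `a ∈ Δ`. Hence `Rg/Rf` has a complement, which produces `u` with `g u ∈ Rf` and
`1 - u ∈ Rg` (`exists_splitting`). If `h` vanishes on `V(g)` and `a ∈ Δ`, then either `u(a) = 0`,
or `g` vanishes at the conjugate `u(a) a u(a)⁻¹`, and so does `h`; in both cases `(h u)(a) = 0`.
Thus `h u ∈ Rf ⊆ Rg`, and `h = h u + h (1 - u) ∈ Rg`.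
-/

open Polynomial

/-- The zero set `V(f) = {a ∈ K : f(a) = 0}`. -/
def zeroSet {K : Type*} [DivisionRing K] (f : K[X]) : Set K := {a : K | f.eval a = 0}

/-- `Δ` is an algebraic subset of `K`: some nonzero polynomial vanishes on it. -/
def IsAlgebraicSet {K : Type*} [DivisionRing K] (Δ : Set K) : Prop :=
  ∃ f : K[X], f ≠ 0 ∧ ∀ a ∈ Δ, f.eval a = 0

/-- `f` is the minimal polynomial of `Δ`: the monic generator of the left ideal of
polynomials vanishing on `Δ`. -/
def IsMinPolyOf {K : Type*} [DivisionRing K] (Δ : Set K) (f : K[X]) : Prop :=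
  f.Monic ∧ ∀ g : K[X], (∀ a ∈ Δ, g.eval a = 0) ↔ ∃ q : K[X], g = q * f

/-- The product formula, written so that it also holds when `u(a) = 0`. -/
lemma eval_mul_conj {K : Type*} [DivisionRing K] (p u : K[X]) (a : K) :
    (p * u).eval a = p.eval (u.eval a * a * (u.eval a)⁻¹) * u.eval a := by
  induction p using Polynomial.induction_on' with
  | add p q hp hq => rw [add_mul, eval_add, hp, hq, eval_add, add_mul]
  | monomial n c =>
    rw [← C_mul_X_pow_eq_monomial, mul_assoc, eval_C_mul, X_pow_mul, eval_mul_X_pow, eval_C_mul,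
      ← one_mul (X ^ n), eval_mul_X_pow, eval_one, one_mul, mul_assoc]
    congr 1
    by_cases hx : u.eval a = 0
    · simp [hx]
    · induction n with
      | zero => simp
      | succ n ih =>
        rw [pow_succ a, ← mul_assoc, ih, pow_succ (_ * _ * _)]
        generalize (eval a u * a * (eval a u)⁻¹) ^ n = y
        simp only [mul_assoc, inv_mul_cancel₀ hx, mul_one]

/-- The left ideal of polynomials vanishing at `a`. -/
def vanishAt {K : Type*} [DivisionRing K] (a : K) : Submodule K[X] K[X] where
  carrier := {p | p.eval a = 0}
  add_mem' := by
    intro p q hp hq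
    simp only [Set.mem_ofPred_eq] at *
    rw [eval_add, hp, hq, add_zero]
  zero_mem' := by simp
  smul_mem' := by
    intro c p hp
    simp only [Set.mem_ofPred_eq] at *
    rw [smul_eq_mul, eval_mul_conj, hp, mul_zero]

lemma mem_vanishAt {K : Type*} [DivisionRing K] {a : K} {p : K[X]} :
    p ∈ vanishAt a ↔ p.eval a = 0 := Iff.rfl

lemma mem_span_iff {K : Type*} [DivisionRing K] {p g : K[X]} :
    p ∈ Submodule.span K[X] {g} ↔ ∃ q : K[X], p = q * g := by
  rw [Submodule.mem_span_singleton]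
  exact ⟨fun ⟨q, h⟩ => ⟨q, h.symm⟩, fun ⟨q, h⟩ => ⟨q, h.symm⟩⟩

/-- Every nonzero left ideal of `K[t]` has a monic generator, by right division with remainder. -/
lemma exists_monic_generator {K : Type*} [DivisionRing K] (I : Submodule K[X] K[X])
    {p : K[X]} (hp : p ∈ I) (hp0 : p ≠ 0) :
    ∃ g : K[X], g.Monic ∧ I = Submodule.span K[X] {g} := by
  classical
  have hmonic : ∀ r ∈ I, r ≠ 0 → ∃ g ∈ I, g.Monic ∧ g.natDegree = r.natDegree := by
    intro r hr hr0
    have hl : r.leadingCoeff ≠ 0 := leadingCoeff_ne_zero.mpr hr0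
    have hl' : r.leadingCoeff⁻¹ ≠ 0 := inv_ne_zero hl
    refine ⟨C r.leadingCoeff⁻¹ * r, I.smul_mem _ hr, ?_, ?_⟩
    · rw [Monic, leadingCoeff_mul, leadingCoeff_C, inv_mul_cancel₀ hl]
    · rw [natDegree_C_mul hl']
  have hex : ∃ n, ∃ g ∈ I, g.Monic ∧ g.natDegree = n :=
    let ⟨g, h1, h2, _⟩ := hmonic p hp hp0
    ⟨_, g, h1, h2, rfl⟩
  obtain ⟨g, hgI, hg, hgn⟩ := Nat.find_spec hex
  have hle : ∀ r ∈ I, r ≠ 0 → g.natDegree ≤ r.natDegree := by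
    intro r hr hr0
    rw [hgn]
    exact Nat.find_min' hex (hmonic r hr hr0)
  refine ⟨g, hg, le_antisymm ?_ ?_⟩
  · suffices H : ∀ n, ∀ r ∈ I, r.degree < (n : ℕ) → r ∈ Submodule.span K[X] {g} by
      intro r hr
      refine H (r.natDegree + 1) r hr ?_
      exact lt_of_le_of_lt degree_le_natDegree (by exact_mod_cast Nat.lt_succ_self _)
    intro n
    induction n with
    | zero =>
      intro r hr hd
      have : r = 0 := by
        rw [← degree_eq_bot]
        simpa using hd
      rw [this]; exact Submodule.zero_mem _
    | succ n ih =>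
      intro r hr hd
      by_cases hr0 : r = 0
      · rw [hr0]; exact Submodule.zero_mem _
      have hl : r.leadingCoeff ≠ 0 := leadingCoeff_ne_zero.mpr hr0
      set s : K[X] := C r.leadingCoeff * X ^ (r.natDegree - g.natDegree) with hs
      have hdeg : (s * g).degree = r.degree := by
        rw [hs, degree_mul, degree_C_mul_X_pow _ hl, degree_eq_natDegree hg.ne_zero,
          degree_eq_natDegree hr0]
        exact_mod_cast Nat.sub_add_cancel (hle r hr hr0)
      have hlc : (s * g).leadingCoeff = r.leadingCoeff := by
        rw [hs, leadingCoeff_mul, hg.leadingCoeff, leadingCoeff_C_mul_X_pow, mul_one]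
      have hlt : (r - s * g).degree < r.degree := degree_sub_lt_left hdeg.symm hr0 hlc.symm
      have hmem := ih (r - s * g) (I.sub_mem hr (I.smul_mem s hgI)) (by
        rw [degree_eq_natDegree hr0] at hlt hd
        have h1 : r.natDegree < n + 1 := by exact_mod_cast hd
        exact lt_of_lt_of_le hlt (by exact_mod_cast Nat.le_of_lt_succ h1))
      have := Submodule.add_mem _ hmem (mem_span_iff.mpr ⟨s, rfl⟩)
      simpa using this
  · rw [Submodule.span_singleton_le_iff_mem]
    exact hgI

/-- When `Rf ⊆ Rg`, right multiplication by `u` is a splitting of `R/Rf → R/Rg`; the inclusion is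
not needed to find `u`. A left ideal meeting `Rg` inside `Rf` is reached by shrinking `Rc` with `Rf ⊆ Rc` and `Rc + Rg = R`: as long as some `w ∈ Rc ∩ Rg` lies outside `Rf`, it has
`w(a) ≠ 0` for some `a ∈ Δ`, and `Rc` may be replaced by its elements vanishing at `a`. The degree
of `c` increases and is bounded by that of `f`. -/
lemma exists_splitting {K : Type*} [DivisionRing K] {Δ : Set K} {f g : K[X]}
    (hf : IsMinPolyOf Δ f) :
    ∃ u : K[X], g * u ∈ Submodule.span K[X] {f} ∧ 1 - u ∈ Submodule.span K[X] {g} := by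
  suffices H : ∀ n, ∀ c : K[X], c.Monic → f ∈ Submodule.span K[X] {c} →
      (∃ u ∈ Submodule.span K[X] {c}, 1 - u ∈ Submodule.span K[X] {g}) →
      f.natDegree < c.natDegree + n →
      ∃ u : K[X], g * u ∈ Submodule.span K[X] {f} ∧ 1 - u ∈ Submodule.span K[X] {g} by
    refine H (f.natDegree + 1) 1 monic_one (mem_span_iff.mpr ⟨f, (mul_one f).symm⟩)
      ⟨1, Submodule.mem_span_singleton_self _, by simp⟩ (by omega)
  intro n
  induction n with
  | zero =>
    intro c hc hfc _ hlt
    obtain ⟨d, hd⟩ := mem_span_iff.mp hfc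
    have hd0 : d ≠ 0 := by
      rintro rfl
      exact hf.1.ne_zero (by rw [hd, zero_mul])
    rw [hd, natDegree_mul hd0 hc.ne_zero] at hlt
    omega
  | succ n ih =>
    rintro c hc hfc ⟨u, huc, hug⟩ hlt
    by_cases hall : ∀ w ∈ Submodule.span K[X] {c}, w ∈ Submodule.span K[X] {g} →
        w ∈ Submodule.span K[X] {f}
    · refine ⟨u, hall _ (Submodule.smul_mem _ g huc) ?_, hug⟩
      -- `g u = g - g (1 - u)`
      have h1 := Submodule.sub_mem _ (Submodule.mem_span_singleton_self (R := K[X]) g)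
        (Submodule.smul_mem _ g hug)
      rwa [smul_eq_mul, mul_sub, mul_one, sub_sub_cancel] at h1
    · push Not at hall
      obtain ⟨w, hwc, hwg, hwf⟩ := hall
      rw [mem_span_iff, ← hf.2 w] at hwf
      push Not at hwf
      obtain ⟨a, ha, hwa⟩ := hwf
      have hfa : f ∈ vanishAt a := (hf.2 f).mpr ⟨1, (one_mul f).symm⟩ a ha
      obtain ⟨c', hc', hI⟩ := exists_monic_generator (Submodule.span K[X] {c} ⊓ vanishAt a)
        (Submodule.mem_inf.mpr ⟨hfc, hfa⟩) hf.1.ne_zero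
      have hc'I : c' ∈ Submodule.span K[X] {c} ⊓ vanishAt a := by
        rw [hI]; exact Submodule.mem_span_singleton_self _
      -- subtracting a constant multiple of `w ∈ Rg` makes `u` vanish at `a`
      set s : K[X] := C (u.eval a * (w.eval a)⁻¹) with hs
      refine ih c' hc' (hI ▸ Submodule.mem_inf.mpr ⟨hfc, hfa⟩) ⟨u - s * w, ?_, ?_⟩ ?_
      · rw [← hI]
        refine Submodule.mem_inf.mpr
          ⟨Submodule.sub_mem _ huc (Submodule.smul_mem _ s hwc), ?_⟩
        rw [mem_vanishAt, eval_sub, hs, eval_C_mul, mul_assoc, inv_mul_cancel₀ hwa, mul_one,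
          sub_self]
      · rw [← sub_add]
        exact Submodule.add_mem _ hug (Submodule.smul_mem _ s hwg)
      · obtain ⟨e, he⟩ := mem_span_iff.mp hc'I.1
        have he0 : e ≠ 0 := by
          rintro rfl
          exact hc'.ne_zero (by rw [he, zero_mul])
        have hdeg : c'.natDegree = e.natDegree + c.natDegree := by
          rw [he, natDegree_mul he0 hc.ne_zero]
        have hepos : e.natDegree ≠ 0 := by
          intro h0
          have hem : e.leadingCoeff = 1 := by
            have := hc'.leadingCoeff
            rwa [he, leadingCoeff_mul, hc.leadingCoeff, mul_one] at this
          have he1 : e = 1 := by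
            rw [leadingCoeff, h0] at hem
            rw [eq_C_of_natDegree_eq_zero h0, hem, C_1]
          -- then `c' = c`, so `c`, and with it `w`, vanishes at `a`
          rw [he1, one_mul] at he
          obtain ⟨v, hv⟩ := mem_span_iff.mp hwc
          apply hwa
          rw [hv, ← he]
          exact (vanishAt a).smul_mem v hc'I.2
        omega

/-- A right divisor `g` of a minimal polynomial `f` generates the left ideal of polynomials
vanishing on `V(g)`. -/
lemma mem_span_of_vanish {K : Type*} [DivisionRing K] {Δ : Set K} {f g h : K[X]}
    (hf : IsMinPolyOf Δ f) (hfg : f ∈ Submodule.span K[X] {g})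
    (hh : ∀ a ∈ zeroSet g, h.eval a = 0) : h ∈ Submodule.span K[X] {g} := by
  obtain ⟨u, hgu, hug⟩ := exists_splitting (g := g) hf
  have hhu : h * u ∈ Submodule.span K[X] {f} := by
    rw [mem_span_iff, ← hf.2]
    intro a ha
    have h1 : (g * u).eval a = 0 := (hf.2 _).mpr (mem_span_iff.mp hgu) a ha
    rw [eval_mul_conj] at h1 ⊢
    rcases mul_eq_zero.mp h1 with h2 | h2
    · rw [hh _ h2, zero_mul]
    · rw [h2, mul_zero]
  have h3 := (Submodule.span_singleton_le_iff_mem f _).mpr hfg hhu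
  have h4 := Submodule.add_mem _ h3 (Submodule.smul_mem _ h hug)
  rwa [smul_eq_mul, mul_sub, mul_one, add_sub_cancel] at h4

/-- The intersection of a nonempty family of full algebraic sets is a full algebraic
set, whose minimal polynomial is the rgcd of the minimal polynomials of the family,
i.e. the monic generator of the left ideal `Σⱼ R·f_{Δⱼ}`. -/
theorem stmt16 {K : Type*} [DivisionRing K] {J : Type*} [Nonempty J]
    (Δ : J → Set K) (halg : ∀ j, IsAlgebraicSet (Δ j))
    (fs : J → K[X]) (hmin : ∀ j, IsMinPolyOf (Δ j) (fs j))
    (hfull : ∀ j, zeroSet (fs j) = Δ j) :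
    IsAlgebraicSet (⋂ j, Δ j) ∧
    ∃ g : K[X], IsMinPolyOf (⋂ j, Δ j) g ∧
      zeroSet g = ⋂ j, Δ j ∧
      Submodule.span K[X] (Set.range fs) = Submodule.span K[X] {g} := by
  obtain ⟨j₀⟩ := ‹Nonempty J›
  have hfs : ∀ j, fs j ∈ Submodule.span K[X] (Set.range fs) :=
    fun j => Submodule.subset_span ⟨j, rfl⟩
  obtain ⟨g, hg, hI⟩ := exists_monic_generator _ (hfs j₀) (hmin j₀).1.ne_zero
  have hzero : zeroSet g = ⋂ j, Δ j := by
    ext a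
    rw [Set.mem_iInter]
    -- both sides say that the left ideal `Rg = Σⱼ R·fⱼ` is contained in `vanishAt a`
    have h1 : a ∈ zeroSet g ↔ Submodule.span K[X] {g} ≤ vanishAt a :=
      (Submodule.span_singleton_le_iff_mem g (vanishAt a)).symm
    rw [h1, ← hI, Submodule.span_le, Set.range_subset_iff]
    exact forall_congr' fun j => by rw [← hfull j]; rfl
  refine ⟨?_, g, ⟨hg, fun h => ⟨fun hh => ?_, ?_⟩⟩, hzero, hI⟩
  · obtain ⟨f, hf0, hf⟩ := halg j₀
    exact ⟨f, hf0, fun a ha => hf a (Set.mem_iInter.mp ha j₀)⟩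
  · rw [← hzero] at hh
    exact mem_span_iff.mp (mem_span_of_vanish (hmin j₀) (hI ▸ hfs j₀) hh)
  · rintro ⟨q, rfl⟩ a ha
    rw [← hzero] at ha
    exact (vanishAt a).smul_mem q ha
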